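/- arXiv:2207.06575 — 2 statements merged into one kernel-verified Lean document; each statement's English description precedes it below -/
import Mathlib

section
/- Let F be a finite extension of ℚ₂ and let F'/F be a Galois extension of degree 3 with Gal(F'/F) generated by σ. Let x ∈ F'^* be such that the class of x in F'^*/(F'^*)² does not lie in the image of F^*/(F^*)² and such that N_{F'/F}(x) is a square in F^*. Then F'(√x, √(σx)) is a Galois extension of F with Galois group isomorphic to the alternating group A₄ (namely (ℤ/2ℤ × ℤ/2ℤ) ⋊ ℤ/3ℤ). -/
open IntermediateField

/-!
Let `u` be the square root of `σ²x` with `stu = w`, where `w ∈ F` satisfies `w² = N(x)`. The four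
sums `±s ± t ± u` with an even number of minus signs are the roots of a quartic whose coefficients
are polynomials in `Tr(x)`, `Tr(x²)` and `w`, hence lie in `F`. They are distinct and generate
`K = F(s, t, u)`, so `K / F` is Galois with group inside `S₄`. Since `x`, `σx` and
`xσx = w² / σ²x` are not squares in `F'`, Kummer theory gives `[K : F] = 3 · 4 = 12`, and `A₄` is
the only subgroup of `S₄` of order 12.
-/

section AlternatingGroup

open Polynomial

theorem nonempty_mulEquiv_alternatingGroup_of_injective {G α : Type*} [Group G] [Fintype α]
    [DecidableEq α] {φ : G →* Equiv.Perm α} (hφ : Function.Injective φ)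
    (hcard : 2 * Nat.card G = (Nat.card α).factorial) : Nonempty (G ≃* alternatingGroup α) := by
  have hrange : Nat.card φ.range = Nat.card G :=
    (Nat.card_congr (MonoidHom.ofInjective hφ).toEquiv).symm
  have hindex : φ.range.index = 2 := by
    have h := φ.range.index_mul_card
    rw [hrange, Nat.card_perm, ← hcard] at h
    have hpos : 0 < Nat.card G := by have := (Nat.card α).factorial_pos; lia
    exact Nat.eq_of_mul_eq_mul_right hpos h
  exact ⟨(MonoidHom.ofInjective hφ).trans
    (MulEquiv.subgroupCongr (Equiv.Perm.eq_alternatingGroup_of_index_eq_two hindex))⟩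

theorem toPermHom_rootSet_injective {F K : Type*} [Field F] [Field K] [Algebra F K] (f : F[X])
    [f.IsSplittingField F K] :
    Function.Injective (MulAction.toPermHom (K ≃ₐ[F] K) (f.rootSet K)) := by
  intro g h hgh
  have hroots : Set.EqOn (g : K →ₐ[F] K) (h : K →ₐ[F] K) (f.rootSet K) := fun r hr =>
    congrArg Subtype.val (DFunLike.congr_fun hgh (⟨r, hr⟩ : f.rootSet K))
  exact AlgEquiv.coe_toAlgHom_injective
    (AlgHom.ext_of_adjoin_eq_top (IsSplittingField.adjoin_rootSet K f) hroots)

theorem nonempty_gal_mulEquiv_alternatingGroup {F K : Type*} [Field F] [Field K] [Algebra F K]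
    {f : F[X]} [f.IsSplittingField F K] (hf : f.Separable) {n : ℕ} (hn : f.natDegree = n)
    (hK : 2 * Module.finrank F K = n.factorial) :
    Nonempty ((K ≃ₐ[F] K) ≃* alternatingGroup (Fin n)) := by
  classical
  have : IsGalois F K := .of_separable_splitting_field hf
  have : FiniteDimensional F K := IsSplittingField.finiteDimensional K f
  have hroots : Fintype.card (f.rootSet K) = n :=
    (card_rootSet_eq_natDegree hf (IsSplittingField.splits K f)).trans hn
  obtain ⟨e⟩ := nonempty_mulEquiv_alternatingGroup_of_injective
    (toPermHom_rootSet_injective (K := K) f)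
    (by rw [IsGalois.card_aut_eq_finrank, hK, Nat.card_eq_fintype_card, hroots])
  exact ⟨e.trans (Fintype.equivFinOfCardEq hroots).altCongrHom⟩

end AlternatingGroup

section EulerQuartic

open Polynomial

/-- The quartic which Euler's solution attaches to a cubic with roots `s²`, `t²`, `u²`: here
`a = s² + t² + u²`, `b = s⁴ + t⁴ + u⁴` and `c = stu`, and the roots are `eulerRoot s t u`. -/
noncomputable def eulerQuartic {R : Type*} [CommRing R] (a b c : R) : R[X] :=
  X ^ 4 - C (2 * a) * X ^ 2 - C (8 * c) * X + C (2 * b - a ^ 2)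

/-- The roots `±s ± t ± u` of Euler's quartic: an even number of signs is negative, so that the
three summands always have product `stu`. -/
def eulerRoot {R : Type*} [CommRing R] (s t u : R) : Fin 4 → R :=
  ![s + t + u, s - t - u, -s + t - u, -s - t + u]

theorem natDegree_eulerQuartic {R : Type*} [CommRing R] [Nontrivial R] (a b c : R) :
    (eulerQuartic a b c).natDegree = 4 := by
  unfold eulerQuartic
  compute_degree!

theorem map_eulerQuartic {R S : Type*} [CommRing R] [CommRing S] (f : R →+* S) (a b c : R) :
    (eulerQuartic a b c).map f = eulerQuartic (f a) (f b) (f c) := by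
  simp [eulerQuartic, map_ofNat f]

theorem eulerQuartic_eq_prod {R : Type*} [CommRing R] (s t u : R) :
    eulerQuartic (s ^ 2 + t ^ 2 + u ^ 2) (s ^ 4 + t ^ 4 + u ^ 4) (s * t * u) =
      ∏ i, (X - C (eulerRoot s t u i)) := by
  simp only [eulerQuartic, eulerRoot, Fin.prod_univ_four, Matrix.cons_val, map_add, map_sub,
    map_neg, map_mul, map_pow, map_ofNat]
  ring

theorem eulerRoot_injective {R : Type*} [CommRing R] [IsDomain R] (h2 : (2 : R) ≠ 0) {s t u : R}
    (hst : s ^ 2 ≠ t ^ 2) (htu : t ^ 2 ≠ u ^ 2) (hus : u ^ 2 ≠ s ^ 2) :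
    Function.Injective (eulerRoot s t u) := by
  -- The difference of two roots is twice a sum or a difference of two of `s`, `t`, `u`.
  have key {a b c d : R} (hab : a ^ 2 ≠ b ^ 2) (h : (c - d) ^ 2 = (2 * (a + b)) ^ 2 ∨
      (c - d) ^ 2 = (2 * (a - b)) ^ 2) : c ≠ d := by
    have hsub : a - b ≠ 0 := fun h => hab (by linear_combination (a + b) * h)
    have hadd : a + b ≠ 0 := fun h => hab (by linear_combination (a - b) * h)
    rintro rfl
    rw [sub_self, zero_pow two_ne_zero] at h
    exact h.elim (pow_ne_zero 2 (mul_ne_zero h2 hadd)).symm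
      (pow_ne_zero 2 (mul_ne_zero h2 hsub)).symm
  intro i j hij
  fin_cases i <;> fin_cases j <;>
    simp only [eulerRoot, Fin.reduceFinMk, Matrix.cons_val] at hij ⊢ <;> exfalso <;> first
    | exact key hst (by first | (left; ring1) | (right; ring1)) hij
    | exact key htu (by first | (left; ring1) | (right; ring1)) hij
    | exact key hus (by first | (left; ring1) | (right; ring1)) hij

theorem adjoin_range_eulerRoot {F Ω : Type*} [Field F] [Field Ω] [Algebra F Ω]
    (h2 : (2 : Ω) ≠ 0) (s t u : Ω) :
    adjoin F (Set.range (eulerRoot s t u)) = adjoin F {s, t, u} := by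
  apply le_antisymm <;> rw [adjoin_le_iff]
  · set L := adjoin F {s, t, u}
    have hs : s ∈ L := subset_adjoin _ _ (by simp)
    have ht : t ∈ L := subset_adjoin _ _ (by simp)
    have hu : u ∈ L := subset_adjoin _ _ (by simp)
    rintro _ ⟨i, rfl⟩
    fin_cases i <;> simp [eulerRoot, add_mem, sub_mem, hs, ht, hu]
  · set L := adjoin F (Set.range (eulerRoot s t u))
    have hroot (i : Fin 4) : eulerRoot s t u i ∈ L := subset_adjoin _ _ ⟨i, rfl⟩
    have half {y : Ω} {i : Fin 4} (hy : 2 * y = eulerRoot s t u 0 + eulerRoot s t u i) :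
        y ∈ L := by
      rw [eq_div_of_mul_eq h2 ((mul_comm y 2).trans hy)]
      exact div_mem (add_mem (hroot 0) (hroot i)) (ofNat_mem L 2)
    rintro y (rfl | rfl | rfl)
    · exact half (i := 1) (by simp only [eulerRoot, Matrix.cons_val]; ring)
    · exact half (i := 2) (by simp only [eulerRoot, Matrix.cons_val]; ring)
    · exact half (i := 3) (by simp only [eulerRoot, Matrix.cons_val]; ring)

section SplittingField

variable {F Ω : Type*} [Field F] [Field Ω] [Algebra F Ω] {a b c : F} {s t u : Ω}

theorem map_algebraMap_eulerQuartic_eq_prod (ha : algebraMap F Ω a = s ^ 2 + t ^ 2 + u ^ 2)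
    (hb : algebraMap F Ω b = s ^ 4 + t ^ 4 + u ^ 4) (hc : algebraMap F Ω c = s * t * u) :
    (eulerQuartic a b c).map (algebraMap F Ω) = ∏ i, (X - C (eulerRoot s t u i)) := by
  rw [map_eulerQuartic, ha, hb, hc, eulerQuartic_eq_prod]

theorem isSplittingField_eulerQuartic (h2 : (2 : Ω) ≠ 0)
    (ha : algebraMap F Ω a = s ^ 2 + t ^ 2 + u ^ 2)
    (hb : algebraMap F Ω b = s ^ 4 + t ^ 4 + u ^ 4) (hc : algebraMap F Ω c = s * t * u) :
    (eulerQuartic a b c).IsSplittingField F (adjoin F {s, t, u}) := by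
  have hprod := map_algebraMap_eulerQuartic_eq_prod ha hb hc
  have hsplits : ((eulerQuartic a b c).map (algebraMap F Ω)).Splits :=
    hprod ▸ Splits.prod fun i _ => Splits.X_sub_C _
  have hroots : (eulerQuartic a b c).rootSet Ω = Set.range (eulerRoot s t u) := by
    ext r
    rw [mem_rootSet', hprod, ← eval_map_algebraMap, hprod, eval_prod, Finset.prod_eq_zero_iff]
    simp [(monic_prod_X_sub_C _ _).ne_zero, sub_eq_zero, eq_comm]
  rw [← adjoin_range_eulerRoot h2, ← hroots]
  exact adjoin_rootSet_isSplittingField hsplits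

theorem separable_eulerQuartic (h2 : (2 : Ω) ≠ 0)
    (ha : algebraMap F Ω a = s ^ 2 + t ^ 2 + u ^ 2)
    (hb : algebraMap F Ω b = s ^ 4 + t ^ 4 + u ^ 4) (hc : algebraMap F Ω c = s * t * u)
    (hst : s ^ 2 ≠ t ^ 2) (htu : t ^ 2 ≠ u ^ 2) (hus : u ^ 2 ≠ s ^ 2) :
    (eulerQuartic a b c).Separable := by
  rw [← separable_map (algebraMap F Ω), map_algebraMap_eulerQuartic_eq_prod ha hb hc,
    separable_prod_X_sub_C_iff]
  exact eulerRoot_injective h2 hst htu hus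

theorem isGalois_and_nonempty_gal_mulEquiv_alternatingGroup_adjoin_triple (h2 : (2 : Ω) ≠ 0)
    (ha : algebraMap F Ω a = s ^ 2 + t ^ 2 + u ^ 2)
    (hb : algebraMap F Ω b = s ^ 4 + t ^ 4 + u ^ 4) (hc : algebraMap F Ω c = s * t * u)
    (hst : s ^ 2 ≠ t ^ 2) (htu : t ^ 2 ≠ u ^ 2) (hus : u ^ 2 ≠ s ^ 2)
    (hdeg : Module.finrank F (adjoin F {s, t, u}) = 12) :
    IsGalois F (adjoin F {s, t, u}) ∧
      Nonempty ((adjoin F {s, t, u} ≃ₐ[F] adjoin F {s, t, u}) ≃* alternatingGroup (Fin 4)) := by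
  have hsep := separable_eulerQuartic h2 ha hb hc hst htu hus
  have := isSplittingField_eulerQuartic h2 ha hb hc
  exact ⟨.of_separable_splitting_field hsep, nonempty_gal_mulEquiv_alternatingGroup hsep
    (natDegree_eulerQuartic a b c) (by rw [hdeg]; rfl)⟩

end SplittingField

end EulerQuartic

section SquareRoots

open Polynomial

variable {E Ω : Type*} [Field E] [Field Ω] [Algebra E Ω] {a b : E} {s t : Ω}

theorem isSquare_iff_sqrt_mem_bot (hs : s ^ 2 = algebraMap E Ω a) :
    IsSquare a ↔ s ∈ (⊥ : IntermediateField E Ω) := by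
  rw [mem_bot]
  constructor
  · rintro ⟨c, rfl⟩
    rw [← sq, map_pow] at hs
    rcases sq_eq_sq_iff_eq_or_eq_neg.mp hs with h | h
    · exact ⟨c, h.symm⟩
    · exact ⟨-c, by rw [map_neg, h]⟩
  · rintro ⟨c, rfl⟩
    rw [← map_pow] at hs
    exact ⟨c, by rw [← sq, (algebraMap E Ω).injective hs]⟩

theorem finrank_adjoin_sqrt (hs : s ^ 2 = algebraMap E Ω a) (ha : ¬IsSquare a) :
    Module.finrank E E⟮s⟯ = 2 := by
  have hirr : Irreducible (X ^ 2 - C a) := X_pow_sub_C_irreducible_of_prime Nat.prime_two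
    fun c hc => ha ⟨c, by rw [← hc, sq]⟩
  have hmonic : (X ^ 2 - C a).Monic := monic_X_pow_sub_C a two_ne_zero
  have hroot : aeval s (X ^ 2 - C a) = 0 := by simp [hs]
  rw [adjoin.finrank ⟨_, hmonic, hroot⟩, ← minpoly.eq_of_irreducible_of_monic hirr hroot hmonic,
    natDegree_X_pow_sub_C]

theorem exists_eq_add_mul_of_mem_adjoin_sqrt (hs : s ^ 2 = algebraMap E Ω a) {y : Ω}
    (hy : y ∈ E⟮s⟯) : ∃ c d : E, y = algebraMap E Ω c + algebraMap E Ω d * s := by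
  have hmonic : (X ^ 2 - C a).Monic := monic_X_pow_sub_C a two_ne_zero
  have hroot : aeval s (X ^ 2 - C a) = 0 := by simp [hs]
  rw [← mem_toSubalgebra, adjoin_simple_toSubalgebra_of_isAlgebraic
    (IsIntegral.isAlgebraic ⟨_, hmonic, hroot⟩), Algebra.adjoin_singleton_eq_range_aeval] at hy
  obtain ⟨f, rfl⟩ := hy
  have hdeg : (f %ₘ (X ^ 2 - C a)).natDegree ≤ 1 := by
    have := natDegree_modByMonic_lt f hmonic (fun h => by simpa using congrArg natDegree h)
    rw [natDegree_X_pow_sub_C] at this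
    lia
  obtain ⟨d, c, hf⟩ := exists_eq_X_add_C_of_natDegree_le_one hdeg
  refine ⟨c, d, ?_⟩
  change aeval s f = _
  rw [← aeval_modByMonic_eq_self_of_root hroot, hf]
  simp [add_comm]

theorem isSquare_or_isSquare_mul_of_sqrt_mem_adjoin_sqrt (h2 : (2 : E) ≠ 0)
    (hs : s ^ 2 = algebraMap E Ω a) (ht : t ^ 2 = algebraMap E Ω b) (ha : ¬IsSquare a)
    (hmem : t ∈ E⟮s⟯) : IsSquare b ∨ IsSquare (a * b) := by
  obtain ⟨c, d, rfl⟩ := exists_eq_add_mul_of_mem_adjoin_sqrt hs hmem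
  have hexpand : algebraMap E Ω (2 * c * d) * s = algebraMap E Ω (b - c ^ 2 - d ^ 2 * a) := by
    simp only [map_mul, map_sub, map_pow, map_ofNat, ← ht, ← hs]
    ring
  have hcross : 2 * c * d = 0 := by
    by_contra hne
    refine ha ((isSquare_iff_sqrt_mem_bot hs).mpr (mem_bot.mpr
      ⟨(b - c ^ 2 - d ^ 2 * a) / (2 * c * d), ?_⟩))
    rw [map_div₀, ← hexpand, mul_div_cancel_left₀ _ ((_root_.map_ne_zero _).mpr hne)]
  have hb : b = c ^ 2 + d ^ 2 * a := by
    rw [hcross, map_zero, zero_mul, eq_comm, map_eq_zero] at hexpand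
    linear_combination hexpand
  rcases mul_eq_zero.mp hcross with hc | rfl
  · obtain rfl : c = 0 := (mul_eq_zero.mp hc).resolve_left h2
    exact .inr ⟨d * a, by rw [hb]; ring⟩
  · exact .inl ⟨c, by rw [hb]; ring⟩

theorem finrank_adjoin_pair_sqrt (h2 : (2 : E) ≠ 0) (hs : s ^ 2 = algebraMap E Ω a)
    (ht : t ^ 2 = algebraMap E Ω b) (ha : ¬IsSquare a) (hb : ¬IsSquare b)
    (hab : ¬IsSquare (a * b)) : Module.finrank E E⟮s, t⟯ = 4 := by
  have ht' : t ^ 2 = algebraMap E⟮s⟯ Ω (algebraMap E E⟮s⟯ b) := ht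
  have hb' : ¬IsSquare (algebraMap E E⟮s⟯ b) := by
    rw [isSquare_iff_sqrt_mem_bot ht', mem_bot]
    rintro ⟨y, rfl⟩
    exact (isSquare_or_isSquare_mul_of_sqrt_mem_adjoin_sqrt h2 hs ht ha y.2).elim hb hab
  calc Module.finrank E E⟮s, t⟯
      = Module.finrank E E⟮s⟯⟮t⟯ := by rw [← adjoin_simple_adjoin_simple]; rfl
    _ = Module.finrank E E⟮s⟯ * Module.finrank E⟮s⟯ E⟮s⟯⟮t⟯ :=
      (Module.finrank_mul_finrank E E⟮s⟯ E⟮s⟯⟮t⟯).symm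
    _ = 4 := by rw [finrank_adjoin_sqrt hs ha, finrank_adjoin_sqrt ht' hb']

theorem not_isSquare_mul_of_mul_eq_sq {E : Type*} [CommGroupWithZero E] {x y z w : E}
    (hz : ¬IsSquare z) (hw : w ^ 2 = x * y * z) (hxy : x * y ≠ 0) : ¬IsSquare (x * y) := fun h =>
  hz (eq_div_of_mul_eq hxy ((mul_comm _ _).trans hw.symm) ▸ (IsSquare.sq w).div h)

theorem exists_sqrt_of_mul_eq_sq {E Ω : Type*} [Field E] [Field Ω] [Algebra E Ω] {x y z w : E}
    (hw : w ^ 2 = x * y * z) (hxy : x * y ≠ 0) {s t : Ω} (hs : s ^ 2 = algebraMap E Ω x)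
    (ht : t ^ 2 = algebraMap E Ω y) :
    ∃ u : Ω, u ^ 2 = algebraMap E Ω z ∧ s * t * u = algebraMap E Ω w := by
  have hst_sq : (s * t) ^ 2 = algebraMap E Ω (x * y) := by rw [mul_pow, hs, ht, map_mul]
  have hst_sq_ne : (s * t) ^ 2 ≠ 0 := hst_sq ▸ (_root_.map_ne_zero _).mpr hxy
  refine ⟨algebraMap E Ω w / (s * t), ?_, mul_div_cancel₀ _ (ne_zero_pow two_ne_zero hst_sq_ne)⟩
  rw [div_pow, div_eq_iff hst_sq_ne, hst_sq, ← map_pow, hw, mul_comm (x * y), map_mul]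

theorem isSquare_of_isSquare_norm_algebraMap {F L : Type*} [Field F] [Ring L] [Algebra F L]
    (hodd : Odd (Module.finrank F L)) {y : F} (hy : IsSquare (Algebra.norm F (algebraMap F L y))) :
    IsSquare y := by
  rw [Algebra.norm_algebraMap] at hy
  obtain ⟨k, hk⟩ := hodd
  rcases eq_or_ne y 0 with rfl | hy0
  · exact .zero
  · have hquot : y = y ^ Module.finrank F L / (y ^ k) ^ 2 := by
      rw [hk, eq_div_iff (by positivity)]
      ring
    exact hquot ▸ hy.div (.sq _)

end SquareRoots

section CyclicExtension

theorem prod_univ_eq_prod_range_pow {G M : Type*} [Group G] [Fintype G] [CommMonoid M] {g : G}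
    (hg : ∀ h, h ∈ Subgroup.zpowers g) (f : G → M) :
    ∏ h, f h = ∏ i ∈ Finset.range (Nat.card G), f (g ^ i) := by
  classical
  rw [← IsCyclic.image_range_card hg, Finset.prod_image]
  rw [← orderOf_eq_card_of_forall_mem_zpowers hg, Finset.coe_range]
  exact pow_injOn_Iio_orderOf

variable {F L : Type*} [Field F] [Field L] [Algebra F L] [FiniteDimensional F L] [IsGalois F L]
  {σ : L ≃ₐ[F] L}

theorem algebraMap_norm_eq_prod_range (hσ : ∀ τ, τ ∈ Subgroup.zpowers σ) (x : L) :
    algebraMap F L (Algebra.norm F x) = ∏ i ∈ Finset.range (Module.finrank F L), (σ ^ i) x := by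
  rw [Algebra.norm_eq_prod_automorphisms, prod_univ_eq_prod_range_pow hσ,
    IsGalois.card_aut_eq_finrank]

theorem algebraMap_trace_eq_sum_range (hσ : ∀ τ, τ ∈ Subgroup.zpowers σ) (x : L) :
    algebraMap F L (Algebra.trace F L x) =
      ∑ i ∈ Finset.range (Module.finrank F L), (σ ^ i) x := by
  rw [trace_eq_sum_automorphisms, ← IsGalois.card_aut_eq_finrank]
  exact prod_univ_eq_prod_range_pow (M := Multiplicative L) hσ fun τ => τ x

theorem pow_finrank_apply (σ : L ≃ₐ[F] L) (x : L) : (σ ^ Module.finrank F L) x = x := by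
  rw [← IsGalois.card_aut_eq_finrank, pow_card_eq_one']
  rfl

theorem apply_ne_self_of_notMem_bot (hσ : ∀ τ, τ ∈ Subgroup.zpowers σ) {x : L}
    (hx : x ∉ (⊥ : IntermediateField F L)) : σ x ≠ x := fun h =>
  have hstab : Subgroup.zpowers σ ≤ MulAction.stabilizer (L ≃ₐ[F] L) x :=
    Subgroup.zpowers_le.mpr h
  hx ((IsGalois.mem_bot_iff_fixed x).mpr fun τ => hstab (hσ τ))

end CyclicExtension

section AdjoinSquareRoots

theorem adjoin_simple_eq_of_finrank_prime {F Ω : Type*} [Field F] [Field Ω] [Algebra F Ω]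
    {L : IntermediateField F Ω} (hL : (Module.finrank F L).Prime) {x : L}
    (hx : x ∉ (⊥ : IntermediateField F L)) : F⟮(x : Ω)⟯ = L := by
  have := isSimpleOrder_of_finrank_prime F L hL
  have htop : F⟮x⟯ = ⊤ := (eq_bot_or_eq_top F⟮x⟯).resolve_left
    (adjoin_simple_eq_bot_iff.not.mpr hx)
  rw [← lift_adjoin_simple, htop, lift_top]

theorem adjoin_union_pair_eq_adjoin_triple {F Ω : Type*} [Field F] [Field Ω] [Algebra F Ω]
    {L : IntermediateField F Ω} (hL : (Module.finrank F L).Prime) {x : L}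
    (hx : x ∉ (⊥ : IntermediateField F L)) {s t u : Ω} (hs : s ^ 2 = x) {w : F} (hw : w ≠ 0)
    (hstu : s * t * u = algebraMap F Ω w) :
    adjoin F ((L : Set Ω) ∪ {s, t}) = adjoin F {s, t, u} := by
  apply le_antisymm <;> rw [adjoin_le_iff]
  · have hsM : s ∈ adjoin F {s, t, u} := subset_adjoin _ _ (by simp)
    have hLM : L ≤ adjoin F {s, t, u} := by
      rw [← adjoin_simple_eq_of_finrank_prime hL hx, adjoin_simple_le_iff, ← hs]
      exact pow_mem hsM 2
    exact Set.union_subset hLM fun y hy => subset_adjoin _ _ (by aesop)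
  · have hsK : s ∈ adjoin F ((L : Set Ω) ∪ {s, t}) := subset_adjoin _ _ (by simp)
    have htK : t ∈ adjoin F ((L : Set Ω) ∪ {s, t}) := subset_adjoin _ _ (by simp)
    have hst : s * t ≠ 0 :=
      left_ne_zero_of_mul (hstu ▸ (map_ne_zero _).mpr hw : s * t * u ≠ 0)
    rintro y (rfl | rfl | rfl)
    · exact hsK
    · exact htK
    · rw [eq_div_of_mul_eq hst ((mul_comm _ _).trans hstu)]
      exact div_mem (IntermediateField.algebraMap_mem _ w) (mul_mem hsK htK)

theorem finrank_adjoin_union_pair_sqrt {F Ω : Type*} [Field F] [Field Ω] [Algebra F Ω]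
    {L : IntermediateField F Ω} (h2 : (2 : L) ≠ 0) {a b : L} {s t : Ω} (hs : s ^ 2 = a)
    (ht : t ^ 2 = b) (ha : ¬IsSquare a) (hb : ¬IsSquare b) (hab : ¬IsSquare (a * b)) :
    Module.finrank F (adjoin F ((L : Set Ω) ∪ {s, t})) = Module.finrank F L * 4 := by
  rw [← restrictScalars_adjoin, ← finrank_adjoin_pair_sqrt h2 hs ht ha hb hab]
  exact (Module.finrank_mul_finrank F L L⟮s, t⟯).symm

theorem isGalois_and_nonempty_gal_mulEquiv_alternatingGroup_of_cubic {F Ω : Type*} [Field F]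
    [Field Ω] [Algebra F Ω] (h2 : (2 : F) ≠ 0) {L : IntermediateField F Ω}
    (hL : Module.finrank F L = 3) {x y z : L} {a b w : F}
    (ha : algebraMap F L a = x + y + z) (hb : algebraMap F L b = x ^ 2 + y ^ 2 + z ^ 2)
    (hw : algebraMap F L w ^ 2 = x * y * z) (hxF : x ∉ (⊥ : IntermediateField F L))
    (hxy : x ≠ y) (hyz : y ≠ z) (hzx : z ≠ x)
    (hx : ¬IsSquare x) (hy : ¬IsSquare y) (hz : ¬IsSquare z)
    {s t : Ω} (hs : s ^ 2 = x) (ht : t ^ 2 = y) :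
    letI K : IntermediateField F Ω := adjoin F ((L : Set Ω) ∪ {s, t})
    IsGalois F K ∧ Nonempty ((K ≃ₐ[F] K) ≃* alternatingGroup (Fin 4)) := by
  have h2L : (2 : L) ≠ 0 := map_ofNat (algebraMap F L) 2 ▸ (map_ne_zero _).mpr h2
  have h2Ω : (2 : Ω) ≠ 0 := map_ofNat (algebraMap F Ω) 2 ▸ (map_ne_zero _).mpr h2
  have hxy0 : x * y ≠ 0 := mul_ne_zero (fun h => hx (h ▸ .zero)) fun h => hy (h ▸ .zero)
  have hw0 : w ≠ 0 := by
    rintro rfl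
    rw [map_zero, zero_pow two_ne_zero, eq_comm] at hw
    exact hz ((mul_eq_zero.mp hw).resolve_left hxy0 ▸ .zero)
  obtain ⟨u, hu, hstu⟩ := exists_sqrt_of_mul_eq_sq hw hxy0 hs ht
  have haΩ : algebraMap F Ω a = s ^ 2 + t ^ 2 + u ^ 2 := by
    rw [hs, ht, hu]
    exact congrArg (algebraMap L Ω) ha
  have hbΩ : algebraMap F Ω b = s ^ 4 + t ^ 4 + u ^ 4 := by
    rw [show 4 = 2 * 2 from rfl, pow_mul, pow_mul, pow_mul, hs, ht, hu]
    exact congrArg (algebraMap L Ω) hb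
  have hK : adjoin F ((L : Set Ω) ∪ {s, t}) = adjoin F {s, t, u} :=
    adjoin_union_pair_eq_adjoin_triple (hL ▸ Nat.prime_three) hxF hs hw0 hstu
  have hfinrank := finrank_adjoin_union_pair_sqrt h2L hs ht hx hy
    (not_isSquare_mul_of_mul_eq_sq hz hw hxy0)
  have hinj : Function.Injective (algebraMap L Ω) := (algebraMap L Ω).injective
  rw [hK, hL] at hfinrank
  rw [hK]
  exact isGalois_and_nonempty_gal_mulEquiv_alternatingGroup_adjoin_triple h2Ω haΩ hbΩ hstu.symm
    (hs ▸ ht ▸ hinj.ne hxy) (ht ▸ hu ▸ hinj.ne hyz) (hu ▸ hs ▸ hinj.ne hzx) hfinrank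

end AdjoinSquareRoots

theorem stmt15_general {F Ω : Type*} [Field F] [Field Ω] [Algebra F Ω] (h2 : (2 : F) ≠ 0)
    (F' : IntermediateField F Ω) [IsGalois F F'] (hdeg : Module.finrank F F' = 3)
    (σ : F' ≃ₐ[F] F') (hσ : ∀ τ : F' ≃ₐ[F] F', τ ∈ Subgroup.zpowers σ)
    (x : F') (hx : ¬IsSquare x) (hnorm : IsSquare (Algebra.norm F x))
    (s t : Ω) (hs : s ^ 2 = x) (ht : t ^ 2 = (σ x : F')) :
    letI K : IntermediateField F Ω := adjoin F ((F' : Set Ω) ∪ {s, t})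
    IsGalois F K ∧ Nonempty ((K ≃ₐ[F] K) ≃* alternatingGroup (Fin 4)) := by
  have : FiniteDimensional F F' := Module.finite_of_finrank_pos (by lia)
  obtain ⟨w, hw⟩ := hnorm
  have hσ3 (y : F') : σ (σ (σ y)) = y := by simpa [hdeg] using pow_finrank_apply σ y
  have htrace (y : F') : algebraMap F F' (Algebra.trace F F' y) = y + σ y + σ (σ y) := by
    simp [algebraMap_trace_eq_sum_range hσ, hdeg, Finset.sum_range_succ]
  have htrace_sq : algebraMap F F' (Algebra.trace F F' (x ^ 2)) =
      x ^ 2 + σ x ^ 2 + σ (σ x) ^ 2 := by rw [htrace, map_pow, map_pow]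
  have hprod : algebraMap F F' w ^ 2 = x * σ x * σ (σ x) := by
    rw [← map_pow, sq, ← hw, algebraMap_norm_eq_prod_range hσ]
    simp [hdeg, Finset.prod_range_succ]
  have hx_bot : x ∉ (⊥ : IntermediateField F F') := by
    rintro ⟨y, rfl⟩
    exact hx ((isSquare_of_isSquare_norm_algebraMap (hdeg ▸ by decide) ⟨w, hw⟩).map _)
  have hσx : σ x ≠ x := apply_ne_self_of_notMem_bot hσ hx_bot
  have hσσx : σ (σ x) ≠ x := fun h => hσx (by simpa only [hσ3] using (congrArg σ h).symm)
  have hσx_sq : ¬IsSquare (σ x) := fun h => hx (by simpa using h.map σ.symm)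
  have hσσx_sq : ¬IsSquare (σ (σ x)) := fun h => hσx_sq (by simpa using h.map σ.symm)
  exact isGalois_and_nonempty_gal_mulEquiv_alternatingGroup_of_cubic h2 hdeg (htrace x)
    htrace_sq hprod hx_bot hσx.symm (σ.injective.ne hσx.symm) hσσx hx hσx_sq hσσx_sq hs ht

/-- `F'(√x, √(σx))` is an `A₄`-extension of `F`, where everything is viewed inside a
fixed algebraic closure `Ω` of `F`, `F'` being a degree-3 Galois intermediate field. -/
theorem stmt15 (F : Type*) [Field F] [Algebra ℚ_[2] F] [FiniteDimensional ℚ_[2] F]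
    (F' : IntermediateField F (AlgebraicClosure F))
    [IsGalois F F'] (hdeg : Module.finrank F F' = 3)
    (σ : F' ≃ₐ[F] F') (hσ : ∀ τ : F' ≃ₐ[F] F', τ ∈ Subgroup.zpowers σ)
    (x : F') (hx0 : x ≠ 0)
    -- the class of `x` in `F'^*/(F'^*)²` is not in the image of `F^*/(F^*)²` :
    (hx : ¬ ∃ (y : F) (z : F'), x = algebraMap F F' y * z ^ 2)
    -- the norm of `x` is a square in `F^*` :
    (hnorm : ∃ w : F, Algebra.norm F x = w ^ 2)
    -- square roots of `x` and `σ x` in the algebraic closure :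
    (s t : AlgebraicClosure F) (hs : s ^ 2 = (x : AlgebraicClosure F))
    (ht : t ^ 2 = ((σ x : F') : AlgebraicClosure F)) :
    letI K : IntermediateField F (AlgebraicClosure F) :=
      IntermediateField.adjoin F ((F' : Set (AlgebraicClosure F)) ∪ {s, t})
    IsGalois F K ∧ Nonempty ((K ≃ₐ[F] K) ≃* alternatingGroup (Fin 4)) := by
  have : CharZero F := charZero_of_injective_algebraMap (algebraMap ℚ_[2] F).injective
  obtain ⟨w, hw⟩ := hnorm
  exact stmt15_general two_ne_zero F' hdeg σ hσ x
    (fun ⟨r, hr⟩ => hx ⟨1, r, by rw [hr, map_one, one_mul, sq]⟩) ⟨w, hw.trans (sq w)⟩ s t hs ht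
end

section
/- Let F be a finite extension of ℚ₂ of degree m. Then the number of Galois extensions of F with Galois group isomorphic to A₄ × ℤ/2ℤ equals the product of ν(F,A₄) with the number of quadratic extensions of F; explicitly, ν(F, A₄ × ℤ/2ℤ) = (2^{m+2} − 1)·ν(F, A₄). -/
/-- `nu F G` is the number of intermediate fields `K` of a fixed algebraic closure of `F`
such that `K/F` is a finite Galois extension with Galois group isomorphic to `G`. -/
noncomputable def nu (F : Type*) [Field F] (G : Type*) [Group G] : ℕ :=
  Nat.card {K : IntermediateField F (AlgebraicClosure F) //
    FiniteDimensional F K ∧ IsGalois F K ∧ Nonempty ((K ≃ₐ[F] K) ≃* G)}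

/-!
Let `G` have trivial center and abelianization of odd order, and let `Γ` be an ambient Galois
group. A normal subgroup of `Γ` with quotient `G × C₂` is, in exactly one way, the intersection of
normal subgroups with quotients `G` and `C₂`: the quotient map to `C₂` is unique because `G` has no
quotient of order two, and the kernel of the one to `G` is the preimage of the center. Conversely
such an intersection always has quotient `G × C₂`, by Goursat's lemma and the coprimality of the
abelianizations. So an extension with group `G × C₂` is the same as a `G`-extension together with a
quadratic one, and quadratic extensions correspond to nontrivial square classes.

Let `O` be the ring of integers of `F`. Since `F` is the fraction field of a discrete valuation
ring, `[Fˣ : Fˣ²] = 2 * [Oˣ : Oˣ²]`. By Hensel's lemma squaring maps the units congruent to `1`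
modulo `4` bijectively onto those congruent to `1` modulo `8`, which have index `|O / 2O|` in them,
and comparing with all of `Oˣ` by a Herbrand quotient gives
`[Oˣ : Oˣ²] = |{±1}| * |O / 2O| = 2 * 2 ^ [F : ℚ₂]`.
-/

section GroupTheory

variable {G H Γ : Type*} [Group G] [CommGroup H] [Group Γ]

theorem eq_top_of_commutator_le_of_coprime {K : Subgroup G} {n : ℕ} (hK : commutator G ≤ K)
    (hindex : K.index ∣ n) (hn : (commutator G).index.Coprime n) : K = ⊤ :=
  Subgroup.index_eq_one.1 (Nat.eq_one_of_dvd_coprimes hn (Subgroup.index_dvd_of_le hK) hindex)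

theorem hom_eq_one_of_coprime_index_commutator (hGH : (commutator G).index.Coprime (Nat.card H))
    (f : G →* H) : f = 1 :=
  MonoidHom.ker_eq_top_iff.1 <|
    eq_top_of_commutator_le_of_coprime (Abelianization.commutator_subset_ker f)
      (Subgroup.index_ker f ▸ f.range.card_subgroup_dvd_card) hGH

theorem ker_eq_ker_fst_of_surjective [Finite G] (hG : Subgroup.center G = ⊥) {f : G × H →* G}
    (hf : Function.Surjective f) : f.ker = (MonoidHom.fst G H).ker := by
  have map_inr (h : H) : f (1, h) = 1 := by
    rw [← Subgroup.mem_bot, ← hG, Subgroup.mem_center_iff]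
    intro g
    obtain ⟨x, rfl⟩ := hf g
    rw [← map_mul, ← map_mul]
    exact congrArg f (Prod.ext (by simp) (mul_comm _ _))
  have map_eq (x : G × H) : f x = f (x.1, 1) := by
    rw [← mul_one (f (x.1, 1)), ← map_inr x.2, ← map_mul, Prod.mk_mul_mk, mul_one, one_mul]
  have surjective_inl : Function.Surjective (f.comp (MonoidHom.inl G H)) := fun g =>
    let ⟨x, hx⟩ := hf g
    ⟨x.1, (map_eq x).symm.trans hx⟩
  ext x
  rw [MonoidHom.mem_ker, map_eq]
  exact map_eq_one_iff _ (Finite.injective_iff_surjective.2 surjective_inl)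

theorem ker_eq_ker_snd_of_surjective [Finite H]
    (hGH : (commutator G).index.Coprime (Nat.card H)) {f : G × H →* H}
    (hf : Function.Surjective f) : f.ker = (MonoidHom.snd G H).ker := by
  have map_inl (g : G) : f (g, 1) = 1 :=
    DFunLike.congr_fun
      (hom_eq_one_of_coprime_index_commutator hGH (f.comp (MonoidHom.inl G H))) g
  have map_eq (x : G × H) : f x = f (1, x.2) := by
    rw [← one_mul (f (1, x.2)), ← map_inl x.1, ← map_mul, Prod.mk_mul_mk, mul_one, one_mul]
  have surjective_inr : Function.Surjective (f.comp (MonoidHom.inr G H)) := fun h =>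
    let ⟨x, hx⟩ := hf h
    ⟨x.2, (map_eq x).symm.trans hx⟩
  ext x
  rw [MonoidHom.mem_ker, map_eq]
  exact map_eq_one_iff _ (Finite.injective_iff_surjective.2 surjective_inr)

theorem prod_surjective_of_coprime_index_commutator
    (hGH : (commutator G).index.Coprime (Nat.card H)) {φ : Γ →* G} {ψ : Γ →* H}
    (hφ : Function.Surjective φ) (hψ : Function.Surjective ψ) :
    Function.Surjective (φ.prod ψ) := by
  have commutator_le : commutator G ≤ ψ.ker.map φ := by
    rw [commutator_def, ← Subgroup.map_top_of_surjective φ hφ, ← Subgroup.map_commutator]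
    exact Subgroup.map_mono (Abelianization.commutator_subset_ker ψ)
  have index_dvd : (ψ.ker.map φ).index ∣ Nat.card H :=
    (Subgroup.index_map_dvd _ hφ).trans
      (Subgroup.index_ker ψ ▸ ψ.range.card_subgroup_dvd_card)
  have map_ker := eq_top_of_commutator_le_of_coprime commutator_le index_dvd hGH
  rintro ⟨g, h⟩
  obtain ⟨x, rfl⟩ := hψ h
  obtain ⟨y, hy, hxy⟩ : (φ x)⁻¹ * g ∈ ψ.ker.map φ := map_ker ▸ Subgroup.mem_top _
  refine ⟨x * y, Prod.ext ?_ ?_⟩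
  · simp [hxy]
  · simpa using hy

theorem exists_surjective_comp_eq_of_ker_le {A B : Type*} [Group A] [Group B] {χ : Γ →* A}
    {φ : Γ →* B} (hχ : Function.Surjective χ) (hφ : Function.Surjective φ) (h : χ.ker ≤ φ.ker) :
    ∃ f : A →* B, Function.Surjective f ∧ f.comp χ = φ := by
  have comp_eq := χ.liftOfRightInverse_comp (f_inv := Function.surjInv hχ)
    (Function.rightInverse_surjInv hχ) ⟨φ, h⟩
  exact ⟨_, .of_comp (g := χ) (by rw [← MonoidHom.coe_comp, comp_eq]; exact hφ), comp_eq⟩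

theorem ker_eq_of_ker_prod_le_left [Finite G] (hG : Subgroup.center G = ⊥) {φ φ' : Γ →* G}
    {ψ : Γ →* H} (hφψ : Function.Surjective (φ.prod ψ))
    (hφ' : Function.Surjective φ') (h : (φ.prod ψ).ker ≤ φ'.ker) : φ'.ker = φ.ker := by
  obtain ⟨f, hf, rfl⟩ := exists_surjective_comp_eq_of_ker_le hφψ hφ' h
  rw [← MonoidHom.comap_ker, ker_eq_ker_fst_of_surjective hG hf, MonoidHom.comap_ker,
    MonoidHom.fst_comp_prod]

theorem ker_eq_of_ker_prod_le_right [Finite H] (hGH : (commutator G).index.Coprime (Nat.card H))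
    {φ : Γ →* G} {ψ ψ' : Γ →* H} (hφψ : Function.Surjective (φ.prod ψ))
    (hψ' : Function.Surjective ψ') (h : (φ.prod ψ).ker ≤ ψ'.ker) : ψ'.ker = ψ.ker := by
  obtain ⟨f, hf, rfl⟩ := exists_surjective_comp_eq_of_ker_le hφψ hψ' h
  rw [← MonoidHom.comap_ker, ker_eq_ker_snd_of_surjective hGH hf, MonoidHom.comap_ker,
    MonoidHom.snd_comp_prod]

theorem index_commutator_alternatingGroup {α : Type*} [Fintype α] [DecidableEq α]
    (hα : Nat.card α = 4) : (commutator (alternatingGroup α)).index = 3 := by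
  have : Nontrivial α := Finite.one_lt_card_iff_nontrivial.1 (by omega)
  have card_mul_index := (commutator (alternatingGroup α)).card_mul_index
  rw [← alternatingGroup.kleinFour_eq_commutator hα,
    alternatingGroup.kleinFour_card_of_card_eq_four hα, nat_card_alternatingGroup, hα]
    at card_mul_index
  rw [← alternatingGroup.kleinFour_eq_commutator hα]
  norm_num [Nat.factorial] at card_mul_index
  omega

end GroupTheory

section GaloisCorrespondence

open IntermediateField

variable {F Ω : Type*} [Field F] [Field Ω] [Algebra F Ω]

/-- `K` is the fixed field of the kernel of a surjective homomorphism from the (possibly infinite)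
Galois group of `Ω / F` onto `A`. For finite `A` this says that `K / F` is a finite Galois
extension with group `A`. It turns the count of such extensions into group theory. -/
def IsCutOutBy (A : Type*) [Group A] (K : IntermediateField F Ω) : Prop :=
  ∃ χ : Gal(Ω/F) →* A, Function.Surjective χ ∧ χ.ker = K.fixingSubgroup

variable {G H : Type*} [Group G] [CommGroup H] {K L L' M M' : IntermediateField F Ω}

theorem IsCutOutBy.sup (hGH : (commutator G).index.Coprime (Nat.card H)) (hM : IsCutOutBy G M)
    (hL : IsCutOutBy H L) : IsCutOutBy (G × H) (M ⊔ L) := by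
  obtain ⟨φ, hφ, hM⟩ := hM
  obtain ⟨ψ, hψ, hL⟩ := hL
  exact ⟨φ.prod ψ, prod_surjective_of_coprime_index_commutator hGH hφ hψ, by
    rw [MonoidHom.ker_prod, hM, hL, fixingSubgroup_sup]⟩

variable [IsGalois F Ω]

theorem fixingSubgroup_le_fixingSubgroup_iff : L.fixingSubgroup ≤ K.fixingSubgroup ↔ K ≤ L := by
  rw [← IntermediateField.le_iff_le, InfiniteGalois.fixedField_fixingSubgroup]

theorem fixingSubgroup_inj : K.fixingSubgroup = L.fixingSubgroup ↔ K = L := by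
  simp only [le_antisymm_iff, fixingSubgroup_le_fixingSubgroup_iff, and_comm]

theorem exists_fixingSubgroup_eq_of_le [FiniteDimensional F K] {U : Subgroup Gal(Ω/F)}
    (hU : K.fixingSubgroup ≤ U) : ∃ M : IntermediateField F Ω, M.fixingSubgroup = U :=
  ⟨fixedField U, InfiniteGalois.fixingSubgroup_fixedField
    ⟨U, U.isClosed_of_isOpen (Subgroup.isOpen_mono hU (fixingSubgroup_isOpen K))⟩⟩

namespace IsCutOutBy

variable {A : Type*} [Group A]

theorem of_mulEquiv [Normal F K] (e : Gal(K/F) ≃* A) : IsCutOutBy A K :=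
  ⟨e.toMonoidHom.comp (AlgEquiv.restrictNormalHom K),
    e.surjective.comp (AlgEquiv.restrictNormalHom_surjective Ω),
    (MonoidHom.ker_mulEquiv_comp _ e).trans (restrictNormalHom_ker K)⟩

theorem isGalois (hK : IsCutOutBy A K) : IsGalois F K := by
  obtain ⟨χ, -, hχ⟩ := hK
  exact (InfiniteGalois.normal_iff_isGalois K).1 (hχ ▸ χ.normal_ker)

theorem finiteDimensional [Finite A] (hK : IsCutOutBy A K) : FiniteDimensional F K := by
  obtain ⟨χ, -, hχ⟩ := hK
  have : K.fixingSubgroup.FiniteIndex := hχ ▸ Subgroup.finiteIndex_ker χ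
  exact (InfiniteGalois.isOpen_iff_finite K).1 <|
    K.fixingSubgroup.isOpen_of_isClosed_of_finiteIndex (InfiniteGalois.fixingSubgroup_isClosed K)

theorem nonempty_mulEquiv (hK : IsCutOutBy A K) : Nonempty (Gal(K/F) ≃* A) := by
  have := hK.isGalois
  obtain ⟨χ, hsurj, hχ⟩ := hK
  have ker_eq := (restrictNormalHom_ker K).trans hχ.symm
  exact ⟨(QuotientGroup.quotientKerEquivOfSurjective _
      (AlgEquiv.restrictNormalHom_surjective Ω)).symm.trans <|
    (QuotientGroup.quotientMulEquivOfEq ker_eq).trans <|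
    QuotientGroup.quotientKerEquivOfSurjective χ hsurj⟩

theorem iff_isGalois_and_nonempty_mulEquiv [Finite A] : IsCutOutBy A K ↔
    FiniteDimensional F K ∧ IsGalois F K ∧ Nonempty (Gal(K/F) ≃* A) :=
  ⟨fun hK => ⟨hK.finiteDimensional, hK.isGalois, hK.nonempty_mulEquiv⟩,
    fun ⟨_, _, ⟨e⟩⟩ => of_mulEquiv e⟩

theorem eq_left_of_le_sup [Finite G] (hG : Subgroup.center G = ⊥)
    (hGH : (commutator G).index.Coprime (Nat.card H)) (hM : IsCutOutBy G M)
    (hL : IsCutOutBy H L) (hM' : IsCutOutBy G M') (hle : M' ≤ M ⊔ L) : M' = M := by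
  obtain ⟨φ, hφ, hM⟩ := hM
  obtain ⟨ψ, hψ, hL⟩ := hL
  obtain ⟨φ', hφ', hM'⟩ := hM'
  rw [← fixingSubgroup_le_fixingSubgroup_iff, fixingSubgroup_sup, ← hM, ← hL, ← hM',
    ← MonoidHom.ker_prod] at hle
  rw [← fixingSubgroup_inj, ← hM, ← hM']
  exact ker_eq_of_ker_prod_le_left hG
    (prod_surjective_of_coprime_index_commutator hGH hφ hψ) hφ' hle

theorem eq_right_of_le_sup [Finite H] (hGH : (commutator G).index.Coprime (Nat.card H))
    (hM : IsCutOutBy G M) (hL : IsCutOutBy H L) (hL' : IsCutOutBy H L') (hle : L' ≤ M ⊔ L) :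
    L' = L := by
  obtain ⟨φ, hφ, hM⟩ := hM
  obtain ⟨ψ, hψ, hL⟩ := hL
  obtain ⟨ψ', hψ', hL'⟩ := hL'
  rw [← fixingSubgroup_le_fixingSubgroup_iff, fixingSubgroup_sup, ← hM, ← hL, ← hL',
    ← MonoidHom.ker_prod] at hle
  rw [← fixingSubgroup_inj, ← hL, ← hL']
  exact ker_eq_of_ker_prod_le_right hGH
    (prod_surjective_of_coprime_index_commutator hGH hφ hψ) hψ' hle

theorem exists_sup_eq [Finite G] [Finite H] (hK : IsCutOutBy (G × H) K) :
    ∃ M L, IsCutOutBy G M ∧ IsCutOutBy H L ∧ M ⊔ L = K := by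
  have := hK.finiteDimensional
  obtain ⟨χ, hsurj, hχ⟩ := hK
  have hle (U : Subgroup (G × H)) : K.fixingSubgroup ≤ U.comap χ := hχ ▸ χ.ker_le_comap U
  obtain ⟨M, hM⟩ := exists_fixingSubgroup_eq_of_le (hle (MonoidHom.fst G H).ker)
  obtain ⟨L, hL⟩ := exists_fixingSubgroup_eq_of_le (hle (MonoidHom.snd G H).ker)
  rw [MonoidHom.comap_ker] at hM hL
  refine ⟨M, L, ⟨(MonoidHom.fst G H).comp χ, Prod.fst_surjective.comp hsurj, hM.symm⟩,
    ⟨(MonoidHom.snd G H).comp χ, Prod.snd_surjective.comp hsurj, hL.symm⟩, ?_⟩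
  rw [← fixingSubgroup_inj, fixingSubgroup_sup, hM, hL, ← hχ, ← MonoidHom.ker_prod,
    MonoidHom.prod_unique]

theorem natCard_prod [Finite G] [Finite H] (hG : Subgroup.center G = ⊥)
    (hGH : (commutator G).index.Coprime (Nat.card H)) :
    Nat.card {K : IntermediateField F Ω // IsCutOutBy (G × H) K} =
      Nat.card {M : IntermediateField F Ω // IsCutOutBy G M} *
        Nat.card {L : IntermediateField F Ω // IsCutOutBy H L} := by
  rw [← Nat.card_prod]
  refine (Nat.card_congr (.ofBijective
    (fun p => ⟨p.1.1 ⊔ p.2.1, sup hGH p.1.2 p.2.2⟩) ⟨?_, ?_⟩)).symm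
  · rintro ⟨⟨M, hM⟩, ⟨L, hL⟩⟩ ⟨⟨M', hM'⟩, ⟨L', hL'⟩⟩ h
    have sup_eq : M ⊔ L = M' ⊔ L' := congrArg Subtype.val h
    obtain rfl := eq_left_of_le_sup hG hGH hM' hL' hM (sup_eq ▸ le_sup_left)
    obtain rfl := eq_right_of_le_sup hGH hM hL' hL (sup_eq ▸ le_sup_right)
    rfl
  · rintro ⟨K, hK⟩
    obtain ⟨M, L, hM, hL, rfl⟩ := hK.exists_sup_eq
    exact ⟨⟨⟨M, hM⟩, ⟨L, hL⟩⟩, rfl⟩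

end IsCutOutBy

theorem nu_eq_natCard_isCutOutBy (F : Type*) [Field F] [PerfectField F] (A : Type*) [Group A]
    [Finite A] :
    nu F A = Nat.card {K : IntermediateField F (AlgebraicClosure F) // IsCutOutBy A K} := by
  simp only [nu, IsCutOutBy.iff_isGalois_and_nonempty_mulEquiv]

theorem nu_prod (F : Type*) [Field F] [PerfectField F] [Finite G] [Finite H]
    (hG : Subgroup.center G = ⊥) (hGH : (commutator G).index.Coprime (Nat.card H)) :
    nu F (G × H) = nu F G * nu F H := by
  simp only [nu_eq_natCard_isCutOutBy, IsCutOutBy.natCard_prod hG hGH]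

theorem nu_of_card_eq_two (F : Type*) [Field F] [PerfectField F] {A : Type*} [Group A]
    (hA : Nat.card A = 2) :
    nu F A = Nat.card {L : IntermediateField F (AlgebraicClosure F) // Module.finrank F L = 2} := by
  refine Nat.card_congr (Equiv.subtypeEquivRight fun L => ⟨?_, fun h => ?_⟩)
  · rintro ⟨_, _, ⟨e⟩⟩
    rw [← IsGalois.card_aut_eq_finrank, Nat.card_congr e.toEquiv, hA]
  · have : Algebra.IsQuadraticExtension F L := ⟨h⟩
    exact ⟨inferInstance, inferInstance,
      ⟨mulEquivOfPrimeCardEq (p := 2) (by rw [IsGalois.card_aut_eq_finrank, h]) hA⟩⟩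

end GaloisCorrespondence

section QuadraticExtensions

open IntermediateField

section SquareClasses

variable {F : Type*} [Field F] {a b : Fˣ}

theorem mem_range_powMonoidHom_two_iff :
    a ∈ (powMonoidHom 2 : Fˣ →* Fˣ).range ↔ IsSquare (a : F) := by
  rw [isSquare_iff_exists_sq]
  constructor
  · rintro ⟨c, rfl⟩
    exact ⟨c, by simp⟩
  · rintro ⟨c, hc⟩
    have hc0 : c ≠ 0 := by
      rintro rfl
      exact a.ne_zero (by rw [hc, zero_pow two_ne_zero])
    exact ⟨Units.mk0 c hc0, Units.ext (by simp [hc])⟩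

theorem mk_range_powMonoidHom_two_eq_iff :
    (a : Fˣ ⧸ (powMonoidHom 2 : Fˣ →* Fˣ).range) = b ↔ IsSquare (a * b : F) := by
  have mul_eq : a * b = a⁻¹ * b * powMonoidHom 2 a := by simp [sq, mul_comm, mul_left_comm]
  rw [QuotientGroup.eq, ← Units.val_mul, ← mem_range_powMonoidHom_two_iff, mul_eq]
  exact (Subgroup.mul_mem_cancel_right _ (MonoidHom.mem_range.2 ⟨a, rfl⟩)).symm

end SquareClasses

variable {F Ω : Type*} [Field F] [Field Ω] [Algebra F Ω] {a b : F} {s t : Ω}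

theorem mem_bot_iff_isSquare (hs : s ^ 2 = algebraMap F Ω a) :
    s ∈ (⊥ : IntermediateField F Ω) ↔ IsSquare a := by
  simp only [mem_bot, Set.mem_range, isSquare_iff_exists_sq]
  constructor
  · rintro ⟨c, rfl⟩
    exact ⟨c, (algebraMap F Ω).injective (by rw [← hs, map_pow])⟩
  · rintro ⟨c, rfl⟩
    rw [map_pow, sq_eq_sq_iff_eq_or_eq_neg] at hs
    rcases hs with rfl | rfl
    · exact ⟨c, rfl⟩
    · exact ⟨-c, map_neg _ c⟩

theorem finrank_adjoin_simple_eq_two_iff (hs : s ^ 2 = algebraMap F Ω a) :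
    Module.finrank F F⟮s⟯ = 2 ↔ ¬IsSquare a := by
  refine ⟨fun hrank ha => ?_, fun ha => ?_⟩
  · rw [finrank_adjoin_simple_eq_one_iff.2 ((mem_bot_iff_isSquare hs).2 ha)] at hrank
    exact absurd hrank (by decide)
  · have irreducible : Irreducible (Polynomial.X ^ 2 - Polynomial.C a) :=
      X_pow_sub_C_irreducible_of_prime Nat.prime_two fun c hc =>
        ha ((isSquare_iff_exists_sq a).2 ⟨c, hc.symm⟩)
    have monic := Polynomial.monic_X_pow_sub_C a two_ne_zero
    have root : Polynomial.aeval s (Polynomial.X ^ 2 - Polynomial.C a) = 0 := by simp [hs]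
    rw [adjoin.finrank ⟨_, monic, root⟩,
      ← minpoly.eq_of_irreducible_of_monic irreducible root monic,
      Polynomial.natDegree_X_pow_sub_C]

theorem exists_sq_eq_and_adjoin_simple_eq [IsGalois F Ω] (hF : ringChar F ≠ 2)
    {L : IntermediateField F Ω} (hL : Module.finrank F L = 2) :
    ∃ (a : F) (s : Ω), s ^ 2 = algebraMap F Ω a ∧ F⟮s⟯ = L := by
  have : Algebra.IsQuadraticExtension F L := ⟨hL⟩
  have : IsGalois F L := { }
  have : IsCyclic Gal(L/F) :=
    isCyclic_of_prime_card (p := 2) (by rw [IsGalois.card_aut_eq_finrank, hL])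
  have primitiveRoots_nonempty : (primitiveRoots 2 F).Nonempty :=
    ⟨-1, (mem_primitiveRoots two_pos).2 (.neg_one (ringChar F) hF)⟩
  obtain ⟨α, ⟨a, ha⟩, hα⟩ :=
    exists_root_adjoin_eq_top_of_isCyclic F L (hL.symm ▸ primitiveRoots_nonempty)
  refine ⟨a, α, ?_, ?_⟩
  · rw [hL] at ha
    exact congrArg (algebraMap L Ω) ha.symm
  · rw [← lift_adjoin_simple, hα, lift_top]

theorem mem_fixingSubgroup_adjoin_simple_iff {σ : Gal(Ω/F)} :
    σ ∈ F⟮s⟯.fixingSubgroup ↔ σ s = s := by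
  simpa using forall_mem_adjoin_smul_eq_self_iff F (S := {s}) σ

theorem adjoin_simple_eq_adjoin_simple_iff [IsGalois F Ω] (hF : ringChar F ≠ 2) (ha : a ≠ 0)
    (hb : b ≠ 0) (hs : s ^ 2 = algebraMap F Ω a) (ht : t ^ 2 = algebraMap F Ω b) :
    F⟮s⟯ = F⟮t⟯ ↔ IsSquare (a * b) := by
  have map_eq_or {c : F} {u : Ω} (hu : u ^ 2 = algebraMap F Ω c) (σ : Gal(Ω/F)) :
      σ u = u ∨ σ u = -u := by
    rw [← sq_eq_sq_iff_eq_or_eq_neg, ← map_pow, hu, AlgEquiv.commutes]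
  have neg_ne {c : F} {u : Ω} (hc : c ≠ 0) (hu : u ^ 2 = algebraMap F Ω c) : -u ≠ u := by
    rw [Ne, Ring.eq_self_iff_eq_zero_of_char_ne_two (Algebra.ringChar_eq F Ω ▸ hF)]
    rintro rfl
    exact hc (by simpa using hu.symm)
  have hst : (s * t) ^ 2 = algebraMap F Ω (a * b) := by rw [mul_pow, hs, ht, map_mul]
  have hab := mul_ne_zero ha hb
  rw [← fixingSubgroup_inj, SetLike.ext_iff, ← mem_bot_iff_isSquare hst,
    InfiniteGalois.mem_bot_iff_fixed]
  refine forall_congr' fun σ => ?_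
  rw [mem_fixingSubgroup_adjoin_simple_iff, mem_fixingSubgroup_adjoin_simple_iff, map_mul]
  rcases map_eq_or hs σ with hσs | hσs <;> rcases map_eq_or ht σ with hσt | hσt <;>
    simp [hσs, hσt, neg_ne ha hs, neg_ne hb ht, neg_ne hab hst]

theorem natCard_finrank_eq_two [IsGalois F Ω] [IsSepClosed Ω] (hF : ringChar F ≠ 2) :
    Nat.card {L : IntermediateField F Ω // Module.finrank F L = 2} =
      (powMonoidHom 2 : Fˣ →* Fˣ).range.index - 1 := by
  set S := (powMonoidHom 2 : Fˣ →* Fˣ).range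
  have : NeZero (2 : Ω) := ⟨Ring.two_ne_zero (Algebra.ringChar_eq F Ω ▸ hF)⟩
  choose sqrt sqrt_sq using fun c : Fˣ ⧸ S =>
    IsSepClosed.exists_pow_nat_eq (algebraMap F Ω (c.out : Fˣ)) 2
  have adjoin_sqrt_eq_iff {c : Fˣ ⧸ S} {a : Fˣ} {s : Ω} (hs : s ^ 2 = algebraMap F Ω a) :
      F⟮sqrt c⟯ = F⟮s⟯ ↔ c = a := by
    rw [adjoin_simple_eq_adjoin_simple_iff hF c.out.ne_zero a.ne_zero (sqrt_sq c) hs,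
      ← mk_range_powMonoidHom_two_eq_iff, QuotientGroup.out_eq']
  have not_isSquare_iff {a : Fˣ} : ¬IsSquare (a : F) ↔ (a : Fˣ ⧸ S) ≠ 1 := by
    rw [← mem_range_powMonoidHom_two_iff, Ne, QuotientGroup.eq_one_iff]
  have injective : Function.Injective fun c => F⟮sqrt c⟯ := fun c d h => by
    rw [(adjoin_sqrt_eq_iff (sqrt_sq d)).1 h, QuotientGroup.out_eq']
  have image_eq : (fun c => F⟮sqrt c⟯) '' {1}ᶜ =
      {L : IntermediateField F Ω | Module.finrank F L = 2} := by
    ext L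
    constructor
    · rintro ⟨c, hc, rfl⟩
      rw [Set.mem_ofPred, finrank_adjoin_simple_eq_two_iff (sqrt_sq c), not_isSquare_iff,
        QuotientGroup.out_eq']
      exact hc
    · intro hL
      obtain ⟨a, s, hs, rfl⟩ := exists_sq_eq_and_adjoin_simple_eq hF hL
      have ha := (finrank_adjoin_simple_eq_two_iff hs).1 hL
      have ha0 : a ≠ 0 := by
        rintro rfl
        exact ha IsSquare.zero
      exact ⟨(Units.mk0 a ha0 : Fˣ ⧸ S), not_isSquare_iff.1 ha, (adjoin_sqrt_eq_iff hs).2 rfl⟩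
  change Nat.card ↥{L : IntermediateField F Ω | Module.finrank F L = 2} = _
  rw [← image_eq, Nat.card_coe_set_eq, Set.ncard_image_of_injective _ injective,
    Set.compl_eq_univ_sdiff, Set.ncard_sdiff_singleton_of_mem (Set.mem_univ 1), Set.ncard_univ,
    Subgroup.index]

end QuadraticExtensions

section PowerIndex

-- A Herbrand quotient argument: up to the finite index of `U` in its source and target, `f` may be
-- replaced by the injective endomorphism that it induces on `U`.
theorem index_range_eq_natCard_ker_mul_relIndex {A : Type*} [CommGroup A] {f : A →* A}
    {U : Subgroup A} [U.FiniteIndex] (hU : U.map f ≤ U) (hker : U ⊓ f.ker = ⊥) :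
    f.range.index = Nat.card f.ker * (U.map f).relIndex U := by
  have relIndex_sup : U.relIndex (U ⊔ f.ker) = Nat.card f.ker := by
    rw [sup_comm, Subgroup.relIndex_sup_right, ← Subgroup.inf_relIndex_right, hker,
      Subgroup.relIndex_bot_left]
  have index_U : U.relIndex (U ⊔ f.ker) * (U ⊔ f.ker).index = U.index :=
    Subgroup.relIndex_mul_index le_sup_left
  have index_sup_ne_zero : (U ⊔ f.ker).index ≠ 0 :=
    right_ne_zero_of_mul (index_U ▸ Subgroup.FiniteIndex.index_ne_zero)
  refine mul_left_cancel₀ index_sup_ne_zero ?_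
  calc (U ⊔ f.ker).index * f.range.index
      = (U.map f).index := (U.index_map f).symm
    _ = (U.map f).relIndex U * U.index := (Subgroup.relIndex_mul_index hU).symm
    _ = (U ⊔ f.ker).index * (Nat.card f.ker * (U.map f).relIndex U) := by
      rw [← index_U, relIndex_sup]
      ring

theorem index_range_powMonoidHom_eq_mul {N A B : Type*} [CommGroup N] [CommGroup A] [CommGroup B]
    {i : N →* A} {f : A →* B} (hi : Function.Injective i) (hf : Function.Surjective f)
    (hif : i.range = f.ker) {n : ℕ} (hn : Function.Injective (powMonoidHom n : B →* B)) :
    (powMonoidHom n : A →* A).range.index =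
      (powMonoidHom n : N →* N).range.index * (powMonoidHom n : B →* B).range.index := by
  set P : Subgroup A := (powMonoidHom n : A →* A).range
  have map_P : P.map f = (powMonoidHom n : B →* B).range := by
    ext b
    constructor
    · rintro ⟨_, ⟨a, rfl⟩, rfl⟩
      exact ⟨f a, (map_pow f a n).symm⟩
    · rintro ⟨b, rfl⟩
      obtain ⟨a, rfl⟩ := hf b
      exact ⟨a ^ n, ⟨a, rfl⟩, map_pow f a n⟩
  have comap_P : P.comap i = (powMonoidHom n : N →* N).range := by
    ext x
    constructor
    · rintro ⟨a, ha⟩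
      have ha_ker : a ∈ f.ker := hn <| by
        calc powMonoidHom n (f a) = f (powMonoidHom n a) := (map_pow f a n).symm
          _ = 1 := by rw [ha]; exact hif.le ⟨x, rfl⟩
          _ = powMonoidHom n 1 := (map_one _).symm
      obtain ⟨y, rfl⟩ := hif.ge ha_ker
      exact ⟨y, hi ((map_pow i y n).trans ha)⟩
    · rintro ⟨y, rfl⟩
      exact ⟨i y, (map_pow i y n).symm⟩
  calc P.index
      = P.relIndex (P ⊔ f.ker) * (P ⊔ f.ker).index :=
        (Subgroup.relIndex_mul_index le_sup_left).symm
    _ = P.relIndex i.range * (P.map f).index := by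
      rw [sup_comm, Subgroup.relIndex_sup_right, hif, Subgroup.index_map, sup_comm,
        MonoidHom.range_eq_top.2 hf, Subgroup.index_top, mul_one]
    _ = (powMonoidHom n : N →* N).range.index * (powMonoidHom n : B →* B).range.index := by
      rw [← Subgroup.index_comap, comap_P, map_P]

theorem index_range_powMonoidHom_multiplicative_int (n : ℕ) :
    (powMonoidHom n : Multiplicative ℤ →* Multiplicative ℤ).range.index = n := by
  have range_eq : (powMonoidHom n : Multiplicative ℤ →* Multiplicative ℤ).range =
      (AddSubgroup.zmultiples (n : ℤ)).toSubgroup := by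
    ext x
    simp only [MonoidHom.mem_range, powMonoidHom_apply, Multiplicative.exists]
    refine exists_congr fun k => ?_
    rw [← ofAdd_nsmul, ← Multiplicative.toAdd.injective.eq_iff, toAdd_ofAdd, nsmul_eq_mul, mul_comm]
    rfl
  rw [range_eq, AddSubgroup.index_toSubgroup, Int.index_zmultiples, Int.natAbs_natCast]

end PowerIndex

section CongruenceUnits

open Polynomial

variable {R : Type*} [CommRing R]

/-- The units of `R` congruent to `1` modulo `I`, generalizing the higher unit groups of a local
field. -/
def congruenceUnits (I : Ideal R) : Subgroup Rˣ :=
  (Units.map (Ideal.Quotient.mk I : R →* R ⧸ I)).ker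

theorem mem_congruenceUnits {I : Ideal R} {u : Rˣ} : u ∈ congruenceUnits I ↔ (u : R) - 1 ∈ I := by
  rw [congruenceUnits, MonoidHom.mem_ker, Units.ext_iff, Units.coe_map, Units.val_one,
    MonoidHom.coe_coe, ← map_one (Ideal.Quotient.mk I), Ideal.Quotient.mk_eq_mk_iff_sub_mem]

theorem mem_congruenceUnits_span_singleton {a : R} {u : Rˣ} :
    u ∈ congruenceUnits (Ideal.span {a}) ↔ ∃ x, (u : R) = 1 + a * x := by
  simp_rw [mem_congruenceUnits, Ideal.mem_span_singleton, Dvd.dvd, sub_eq_iff_eq_add']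

theorem congruenceUnits_mono {I J : Ideal R} (h : I ≤ J) :
    congruenceUnits I ≤ congruenceUnits J := fun _ hu =>
  mem_congruenceUnits.2 (h (mem_congruenceUnits.1 hu))

instance (I : Ideal R) [Finite (R ⧸ I)] : (congruenceUnits I).FiniteIndex :=
  Subgroup.finiteIndex_ker _

variable {a b : R}

theorem exists_hom_congruenceUnits (ha : a ∈ nonZeroDivisors R) (hba : b ∣ a) :
    ∃ θ : congruenceUnits (Ideal.span {a}) →* Multiplicative (R ⧸ Ideal.span {b}),
      ∀ (u : congruenceUnits (Ideal.span {a})) (x : R), ((u : Rˣ) : R) = 1 + a * x →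
        θ u = Multiplicative.ofAdd (Ideal.Quotient.mk _ x) := by
  choose coord hcoord using fun u : congruenceUnits (Ideal.span {a}) =>
    mem_congruenceUnits_span_singleton.1 u.2
  have coord_unique {u : congruenceUnits (Ideal.span {a})} {x : R}
      (hx : ((u : Rˣ) : R) = 1 + a * x) : coord u = x :=
    mul_cancel_left_mem_nonZeroDivisors ha |>.1 (add_left_cancel ((hcoord u).symm.trans hx))
  have coord_mul (u v) : coord (u * v) = coord u + coord v + a * (coord u * coord v) :=
    coord_unique (by push_cast; rw [hcoord u, hcoord v]; ring)
  have mk_mul_eq_zero (y : R) : Ideal.Quotient.mk (Ideal.span {b}) (a * y) = 0 :=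
    Ideal.Quotient.eq_zero_iff_mem.2 (Ideal.mem_span_singleton.2 (hba.mul_right y))
  refine ⟨MonoidHom.mk' (fun u => Multiplicative.ofAdd (Ideal.Quotient.mk _ (coord u)))
    fun u v => ?_, fun u x hx => ?_⟩
  · rw [coord_mul, RingHom.map_add, RingHom.map_add, mk_mul_eq_zero, add_zero, ofAdd_add]
  · rw [MonoidHom.mk'_apply, coord_unique hx]

theorem relIndex_congruenceUnits_mul (ha : a ∈ nonZeroDivisors R)
    (ha' : a ∈ (⊥ : Ideal R).jacobson) (hba : b ∣ a) :
    (congruenceUnits (Ideal.span {a * b})).relIndex (congruenceUnits (Ideal.span {a})) =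
      Nat.card (R ⧸ Ideal.span {b}) := by
  obtain ⟨θ, hθ⟩ := exists_hom_congruenceUnits ha hba
  have surjective : Function.Surjective θ := fun y => by
    obtain ⟨x, hx⟩ := Ideal.Quotient.mk_surjective y.toAdd
    have isUnit : IsUnit (1 + a * x) := by
      rw [add_comm]
      exact Ideal.mem_jacobson_bot.1 ha' x
    exact ⟨⟨isUnit.unit, mem_congruenceUnits_span_singleton.2 ⟨x, rfl⟩⟩,
      (hθ _ x rfl).trans (congrArg Multiplicative.ofAdd hx)⟩
  have ker_eq : (congruenceUnits (Ideal.span {a * b})).subgroupOf _ = θ.ker := by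
    ext u
    obtain ⟨x, hx⟩ := mem_congruenceUnits_span_singleton.1 u.2
    rw [Subgroup.mem_subgroupOf, mem_congruenceUnits, MonoidHom.mem_ker, hθ u x hx, ofAdd_eq_one,
      Ideal.Quotient.eq_zero_iff_mem, hx, add_sub_cancel_left, Ideal.mem_span_singleton,
      Ideal.mem_span_singleton, dvd_cancel_left_mem_nonZeroDivisors ha]
  rw [Subgroup.relIndex, ker_eq, Subgroup.index_ker, MonoidHom.range_eq_top.2 surjective,
    Subgroup.card_top]
  rfl

theorem map_powMonoidHom_two_congruenceUnits_four [HenselianRing R (Ideal.span {2})] :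
    (congruenceUnits (Ideal.span {(4 : R)})).map (powMonoidHom 2) =
      congruenceUnits (Ideal.span {8}) := by
  ext u
  rw [mem_congruenceUnits_span_singleton]
  constructor
  · rintro ⟨v, hv, rfl⟩
    obtain ⟨x, hx⟩ := mem_congruenceUnits_span_singleton.1 hv
    exact ⟨x + 2 * x ^ 2, by rw [powMonoidHom_apply, Units.val_pow_eq_pow_val, hx]; ring⟩
  · rintro ⟨y, hy⟩
    set p : Polynomial R := X ^ 2 + X - C (2 * y)
    have p_monic : p.Monic := by simp only [p]; monicity!
    have p_zero_mem : p.eval 0 ∈ Ideal.span {2} := by simp [p, Ideal.mem_span_singleton]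
    have derivative_p_zero : p.derivative.eval 0 = 1 := by simp [p]
    obtain ⟨z, hz, hz_mem⟩ := HenselianRing.is_henselian (I := Ideal.span {2}) p
      p_monic 0 p_zero_mem (by rw [derivative_p_zero, map_one]; exact isUnit_one)
    rw [sub_zero, Ideal.mem_span_singleton] at hz_mem
    obtain ⟨w, rfl⟩ := hz_mem
    simp only [p, IsRoot.def, eval_sub, eval_add, eval_pow, eval_X, eval_C] at hz
    have sq_eq : (1 + 4 * w) ^ 2 = (u : R) := by linear_combination 4 * hz - hy
    have isUnit : IsUnit (1 + 4 * w) := (isUnit_pow_iff two_ne_zero).1 (sq_eq ▸ u.isUnit)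
    exact ⟨isUnit.unit, mem_congruenceUnits_span_singleton.2 ⟨w, rfl⟩, Units.ext sq_eq⟩

theorem natCard_ker_powMonoidHom_two_units [IsDomain R] (hR : ringChar R ≠ 2) :
    Nat.card (powMonoidHom 2 : Rˣ →* Rˣ).ker = 2 :=
  (IsPrimitiveRoot.neg_one (ringChar R) hR).card_rootsOfUnity

theorem congruenceUnits_four_inf_ker_powMonoidHom_two [IsDomain R] (hR : ringChar R ≠ 2)
    (h2 : ¬IsUnit (2 : R)) :
    congruenceUnits (Ideal.span {(4 : R)}) ⊓ (powMonoidHom 2 : Rˣ →* Rˣ).ker = ⊥ := by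
  refine (Subgroup.eq_bot_iff_forall _).2 fun u ⟨hu, hu_sq⟩ => ?_
  obtain rfl | rfl := Units.eq_or_eq_neg_of_sq_eq_sq u 1 (hu_sq.trans (one_pow 2).symm)
  · rfl
  obtain ⟨x, hx⟩ := mem_congruenceUnits_span_singleton.1 hu
  refine absurd (IsUnit.of_mul_eq_one (-x) ?_) h2
  refine mul_left_cancel₀ (Ring.two_ne_zero hR) ?_
  rw [Units.val_neg, Units.val_one] at hx
  linear_combination hx

theorem index_range_powMonoidHom_two_units [IsDomain R] (hR : ringChar R ≠ 2)
    [HenselianRing R (Ideal.span {2})] [Finite (R ⧸ Ideal.span {(2 : R)})] :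
    (powMonoidHom 2 : Rˣ →* Rˣ).range.index = 2 * Nat.card (R ⧸ Ideal.span {(2 : R)}) := by
  have two_mem_jacobson : (2 : R) ∈ (⊥ : Ideal R).jacobson :=
    HenselianRing.jac (Ideal.mem_span_singleton_self 2)
  have two_not_isUnit : ¬IsUnit (2 : R) := fun h =>
    bot_ne_top (Ideal.jacobson_eq_top_iff.1 (Ideal.eq_top_of_isUnit_mem _ two_mem_jacobson h))
  have four_eq : (4 : R) = 2 * 2 := by norm_num
  have four_ne_zero : (4 : R) ≠ 0 := by
    rw [four_eq]
    exact mul_ne_zero (Ring.two_ne_zero hR) (Ring.two_ne_zero hR)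
  have four_mem_jacobson : (4 : R) ∈ (⊥ : Ideal R).jacobson := by
    rw [four_eq]
    exact Ideal.mul_mem_left _ 2 two_mem_jacobson
  have finite_quotient_four : Finite (R ⧸ Ideal.span {(4 : R)}) := by
    rw [four_eq, ← sq, ← Ideal.span_singleton_pow]
    exact Ideal.finite_quotient_pow (Submodule.fg_span_singleton 2) 2
  have map_eq : (congruenceUnits (Ideal.span {(4 : R)})).map (powMonoidHom 2) =
      congruenceUnits (Ideal.span {4 * 2}) := by
    rw [map_powMonoidHom_two_congruenceUnits_four, show (8 : R) = 4 * 2 by norm_num]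
  have map_le := map_eq.trans_le <| congruenceUnits_mono <|
    Ideal.span_singleton_le_span_singleton.2 (Dvd.intro (2 : R) rfl)
  rw [index_range_eq_natCard_ker_mul_relIndex map_le
      (congruenceUnits_four_inf_ker_powMonoidHom_two hR two_not_isUnit),
    natCard_ker_powMonoidHom_two_units hR, map_eq, relIndex_congruenceUnits_mul
      (mem_nonZeroDivisors_of_ne_zero four_ne_zero) four_mem_jacobson ⟨2, four_eq⟩]

end CongruenceUnits

section CompleteDiscreteValuationRing

theorem index_range_powMonoidHom_units_fractionRing (O K : Type*) [CommRing O] [IsDomain O]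
    [IsDiscreteValuationRing O] [Field K] [Algebra O K] [IsFractionRing O K] {n : ℕ} (hn : n ≠ 0) :
    (powMonoidHom n : Kˣ →* Kˣ).range.index = (powMonoidHom n : Oˣ →* Oˣ).range.index * n := by
  let v : Kˣ →* Multiplicative ℤ := (IsDiscreteValuationRing.maximalIdeal O).valuationOfNeZero
  have v_surjective : Function.Surjective v := fun k => by
    obtain ⟨x, hx⟩ := (IsDiscreteValuationRing.maximalIdeal O).valuation_surjective K k
    have x_ne_zero : x ≠ 0 := by
      rintro rfl
      simp at hx
    exact ⟨Units.mk0 x x_ne_zero, WithZero.coe_inj.1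
      ((IsDedekindDomain.HeightOneSpectrum.valuationOfNeZero_eq _ _).trans hx)⟩
  have range_eq_ker : (Units.map (algebraMap O K : O →* K)).range = v.ker := by
    refine le_antisymm ?_ fun x hx => ?_
    · rintro _ ⟨u, rfl⟩
      exact IsDedekindDomain.HeightOneSpectrum.valuation_of_unit_eq _ u
    · have x_mem : (x : K) ∈
          MonoidHom.mker ((IsDiscreteValuationRing.maximalIdeal O).valuation K) :=
        (IsDedekindDomain.HeightOneSpectrum.valuationOfNeZero_eq _ x).symm.trans
          (congrArg WithZero.coe hx)
      rw [IsDiscreteValuationRing.mker_valuation_eq_isUnitSubmonoid] at x_mem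
      obtain ⟨a, ha, hax⟩ := x_mem
      exact ⟨IsUnit.unit ha, Units.ext hax⟩
  rw [index_range_powMonoidHom_eq_mul (Units.map_injective (IsFractionRing.injective O K))
      v_surjective range_eq_ker (pow_left_injective hn),
    index_range_powMonoidHom_multiplicative_int]

theorem isPrecomplete_of_moduleFinite {R : Type*} [CommRing R] (I : Ideal R) [IsPrecomplete I R]
    (M : Type*) [AddCommGroup M] [Module R M] [Module.Finite R M] : IsPrecomplete I M := by
  refine AdicCompletion.of_surjective_iff.1 fun y => ?_
  obtain ⟨t, rfl⟩ := AdicCompletion.ofTensorProduct_surjective_of_finite I M y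
  induction t with
  | zero => exact ⟨0, by rw [map_zero, map_zero]⟩
  | add t t' ht ht' =>
    obtain ⟨x, hx⟩ := ht
    obtain ⟨x', hx'⟩ := ht'
    exact ⟨x + x', by rw [map_add, map_add, hx, hx']⟩
  | tmul r x =>
    obtain ⟨s, rfl⟩ := AdicCompletion.of_surjective I R r
    exact ⟨s • x, by rw [AdicCompletion.ofTensorProduct_tmul, map_smul]; rfl⟩

theorem isAdicComplete_of_moduleFinite {R : Type*} [CommRing R] [IsNoetherianRing R] (I : Ideal R)
    [IsAdicComplete I R] (M : Type*) [AddCommGroup M] [Module R M] [Module.Finite R M] :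
    IsAdicComplete I M where
  toIsHausdorff := IsHausdorff.of_le_jacobson I M (IsAdicComplete.le_jacobson_bot I)
  toIsPrecomplete := isPrecomplete_of_moduleFinite I M

theorem natCard_quotient_map_maximalIdeal (R S : Type*) [CommRing R] [IsLocalRing R] [CommRing S]
    [Algebra R S] [Module.Finite R S] [Module.Free R S] :
    Nat.card (S ⧸ (IsLocalRing.maximalIdeal R).map (algebraMap R S)) =
      Nat.card (IsLocalRing.ResidueField R) ^ Module.finrank R S := by
  let : Field (R ⧸ IsLocalRing.maximalIdeal R) := Ideal.Quotient.field _
  have := Module.Finite.of_restrictScalars_finite R (R ⧸ IsLocalRing.maximalIdeal R)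
    (S ⧸ (IsLocalRing.maximalIdeal R).map (algebraMap R S))
  rw [Module.natCard_eq_pow_finrank (K := R ⧸ IsLocalRing.maximalIdeal R),
    IsLocalRing.finrank_quotient_map]
  rfl

theorem index_range_powMonoidHom_two_fractionRing (O K : Type*) [CommRing O] [IsDomain O]
    [IsDiscreteValuationRing O] [Field K] [Algebra O K] [IsFractionRing O K]
    (hO : ringChar O ≠ 2) [HenselianRing O (Ideal.span {2})] [Finite (O ⧸ Ideal.span {(2 : O)})] :
    (powMonoidHom 2 : Kˣ →* Kˣ).range.index = 4 * Nat.card (O ⧸ Ideal.span {(2 : O)}) := by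
  rw [index_range_powMonoidHom_units_fractionRing O K two_ne_zero,
    index_range_powMonoidHom_two_units hO]
  ring

end CompleteDiscreteValuationRing

section PadicExtensions

variable {p : ℕ} [Fact p.Prime] {F : Type*} [Field F] [Algebra ℚ_[p] F] [Algebra ℤ_[p] F]
  [IsScalarTower ℤ_[p] ℚ_[p] F]

variable (p F) in
theorem isTorsionFree_padicInt : Module.IsTorsionFree ℤ_[p] F := by
  rw [Module.isTorsionFree_iff_algebraMap_injective, IsScalarTower.algebraMap_eq ℤ_[p] ℚ_[p] F]
  exact (algebraMap ℚ_[p] F).injective.comp (IsFractionRing.injective ℤ_[p] ℚ_[p])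

theorem isIntegral_iff_spectralNorm_le_one [Algebra.IsAlgebraic ℚ_[p] F] {x : F} :
    IsIntegral ℤ_[p] x ↔ spectralNorm ℚ_[p] F x ≤ 1 := by
  have hx : IsIntegral ℚ_[p] x := Algebra.IsIntegral.isIntegral x
  rw [spectralNorm, spectralValue_le_one_iff (minpoly.monic hx)]
  constructor
  · intro h i
    rw [minpoly.isIntegrallyClosed_eq_field_fractions' ℚ_[p] h, Polynomial.coeff_map]
    exact PadicInt.norm_le_one _
  · intro h
    have mem_lifts : minpoly ℚ_[p] x ∈ Polynomial.lifts (algebraMap ℤ_[p] ℚ_[p]) :=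
      (Polynomial.lifts_iff_coeff_lifts _).2 fun i => ⟨⟨_, h i⟩, rfl⟩
    obtain ⟨q, hq, -, q_monic⟩ :=
      Polynomial.lifts_and_natDegree_eq_and_monic mem_lifts (minpoly.monic hx)
    refine ⟨q, q_monic, ?_⟩
    rw [← Polynomial.aeval_def, ← Polynomial.aeval_map_algebraMap ℚ_[p], hq, minpoly.aeval]

variable [FiniteDimensional ℚ_[p] F]

variable (p F) in
theorem valuationRing_integralClosure : ValuationRing (integralClosure ℤ_[p] F) := by
  have := integralClosure.isFractionRing_of_finite_extension (A := ℤ_[p]) ℚ_[p] F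
  refine (ValuationRing.iff_isInteger_or_isInteger _ F).2 fun x => ?_
  have isInteger {y : F} (hy : spectralNorm ℚ_[p] F y ≤ 1) :
      IsLocalization.IsInteger (integralClosure ℤ_[p] F) y :=
    ⟨⟨y, isIntegral_iff_spectralNorm_le_one.2 hy⟩, rfl⟩
  refine Or.imp isInteger isInteger ?_
  by_contra! h
  have x_ne_zero : x ≠ 0 := by
    rintro rfl
    exact h.1.not_ge (spectralNorm_zero.trans_le zero_le_one)
  refine (one_lt_mul_of_lt_of_le h.1 h.2.le).ne ?_
  rw [← spectralMulAlgNorm_def, ← spectralMulAlgNorm_def, ← map_mul, mul_inv_cancel₀ x_ne_zero,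
    map_one]

variable (p F) in
theorem isDiscreteValuationRing_integralClosure :
    IsDiscreteValuationRing (integralClosure ℤ_[p] F) := by
  have valuationRing := valuationRing_integralClosure p F
  have := IsIntegralClosure.isNoetherianRing ℤ_[p] ℚ_[p] F (integralClosure ℤ_[p] F)
  have := isTorsionFree_padicInt p F
  have not_isField : ¬IsField (integralClosure ℤ_[p] F) := fun h =>
    IsDiscreteValuationRing.not_isField ℤ_[p] <| isField_of_isIntegral_of_isField
      (FaithfulSMul.algebraMap_injective ℤ_[p] (integralClosure ℤ_[p] F)) h
  exact ((IsDiscreteValuationRing.TFAE (integralClosure ℤ_[p] F) not_isField).out 0 1).2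
    valuationRing

variable (p) in
theorem map_maximalIdeal_padicInt (S : Type*) [CommRing S] [Algebra ℤ_[p] S] :
    (IsLocalRing.maximalIdeal ℤ_[p]).map (algebraMap ℤ_[p] S) = Ideal.span {(p : S)} := by
  rw [PadicInt.maximalIdeal_eq_span_p, Ideal.map_span, Set.image_singleton, map_natCast]

variable (p) in
theorem henselianRing_span_of_moduleFinite_padicInt (S : Type*) [CommRing S] [Algebra ℤ_[p] S]
    [Module.Finite ℤ_[p] S] : HenselianRing S (Ideal.span {(p : S)}) := by
  have : IsAdicComplete (Ideal.span {(p : S)}) S := by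
    rw [← map_maximalIdeal_padicInt, IsAdicComplete.map_algebraMap_iff]
    exact isAdicComplete_of_moduleFinite (IsLocalRing.maximalIdeal ℤ_[p]) S
  infer_instance

variable (p) in
theorem natCard_quotient_span_of_free_padicInt (S : Type*) [CommRing S] [Algebra ℤ_[p] S]
    [Module.Finite ℤ_[p] S] [Module.Free ℤ_[p] S] :
    Nat.card (S ⧸ Ideal.span {(p : S)}) = p ^ Module.finrank ℤ_[p] S := by
  rw [← map_maximalIdeal_padicInt, natCard_quotient_map_maximalIdeal,
    Nat.card_congr PadicInt.residueField.toEquiv, Nat.card_zmod]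

theorem index_range_powMonoidHom_two_of_padic (F : Type*) [Field F] [Algebra ℚ_[2] F]
    [FiniteDimensional ℚ_[2] F] :
    (powMonoidHom 2 : Fˣ →* Fˣ).range.index = 2 ^ (Module.finrank ℚ_[2] F + 2) := by
  let : Algebra ℤ_[2] F := ((algebraMap ℚ_[2] F).comp (algebraMap ℤ_[2] ℚ_[2])).toAlgebra
  have : IsScalarTower ℤ_[2] ℚ_[2] F := IsScalarTower.of_algebraMap_eq fun _ => rfl
  have := isTorsionFree_padicInt 2 F
  have : CharZero F := charZero_of_injective_algebraMap (algebraMap ℚ_[2] F).injective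
  let O := integralClosure ℤ_[2] F
  have := isDiscreteValuationRing_integralClosure 2 F
  have := integralClosure.isFractionRing_of_finite_extension (A := ℤ_[2]) ℚ_[2] F
  have := IsIntegralClosure.module_free ℤ_[2] ℚ_[2] F O
  have := IsIntegralClosure.finite ℤ_[2] ℚ_[2] F O
  have : HenselianRing O (Ideal.span {2}) := henselianRing_span_of_moduleFinite_padicInt 2 O
  have natCard_quotient : Nat.card (O ⧸ Ideal.span {(2 : O)}) = 2 ^ Module.finrank ℚ_[2] F := by
    rw [← IsIntegralClosure.rank ℤ_[2] ℚ_[2] F O]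
    exact natCard_quotient_span_of_free_padicInt 2 O
  have : Finite (O ⧸ Ideal.span {(2 : O)}) :=
    Nat.finite_of_card_ne_zero (natCard_quotient ▸ pow_ne_zero _ two_ne_zero)
  rw [index_range_powMonoidHom_two_fractionRing O F (by rw [ringChar.eq_zero]; decide),
    natCard_quotient]
  ring

end PadicExtensions

theorem stmt16_general (F : Type*) [Field F] [Algebra ℚ_[2] F] [FiniteDimensional ℚ_[2] F]
    (m : ℕ) (hm : Module.finrank ℚ_[2] F = m) (G : Type*) [Group G] [Finite G]
    (center_eq_bot : Subgroup.center G = ⊥) (odd_index : Odd (commutator G).index) :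
    nu F (G × Multiplicative (ZMod 2)) =
      Nat.card {L : IntermediateField F (AlgebraicClosure F) // Module.finrank F L = 2} *
        nu F G ∧
    nu F (G × Multiplicative (ZMod 2)) = (2 ^ (m + 2) - 1) * nu F G := by
  have : CharZero F := charZero_of_injective_algebraMap (algebraMap ℚ_[2] F).injective
  have natCard_two : Nat.card (Multiplicative (ZMod 2)) = 2 := Nat.card_zmod 2
  have natCard_quadratic :
      Nat.card {L : IntermediateField F (AlgebraicClosure F) // Module.finrank F L = 2} =
        2 ^ (m + 2) - 1 := by
    rw [natCard_finrank_eq_two (by rw [ringChar.eq_zero]; decide),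
      index_range_powMonoidHom_two_of_padic, hm]
  have nu_eq_mul : nu F (G × Multiplicative (ZMod 2)) =
      Nat.card {L : IntermediateField F (AlgebraicClosure F) // Module.finrank F L = 2} *
        nu F G := by
    rw [nu_prod F center_eq_bot (natCard_two.symm ▸ odd_index.coprime_two_right),
      nu_of_card_eq_two F natCard_two, mul_comm]
  exact ⟨nu_eq_mul, natCard_quadratic ▸ nu_eq_mul⟩

theorem stmt16 (F : Type*) [Field F] [Algebra ℚ_[2] F] [FiniteDimensional ℚ_[2] F]
    (m : ℕ) (hm : Module.finrank ℚ_[2] F = m) :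
    nu F (alternatingGroup (Fin 4) × Multiplicative (ZMod 2)) =
      Nat.card {L : IntermediateField F (AlgebraicClosure F) // Module.finrank F L = 2} *
        nu F (alternatingGroup (Fin 4)) ∧
    nu F (alternatingGroup (Fin 4) × Multiplicative (ZMod 2)) =
      (2 ^ (m + 2) - 1) * nu F (alternatingGroup (Fin 4)) :=
  stmt16_general F m hm (alternatingGroup (Fin 4))
    (alternatingGroup.center_eq_bot (Nat.card_fin 4).ge)
    (by rw [index_commutator_alternatingGroup (Nat.card_fin 4)]; decide)
end
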